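/- Let J, K be positive integers, let L : Fin J → Fin K → ℝ be a fixed (large-scale fading) matrix, and let B be any real J × J matrix. Let G be a random J × K matrix whose entries are i.i.d. standard real Gaussians, i.e. the law of G is the product measure μ = Measure.pi (fun _ : Fin J × Fin K => gaussianReal 0 1). Then the expected squared Frobenius norm of Δ(B) := L ∘ G − B * G (Hadamard product minus matrix product) satisfies ∫ ‖Δ(B)‖_F² dμ = ∑_{j<J} ∑_{k<K} (L j k − B j j)² + K · ∑_{j<J} ∑_{i<J, i≠j} (B j i)². -/

import Mathlib

/-!
Each entry of `Δ(B)` is a linear form in the i.i.d. standard Gaussian coordinates: in position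
`(j, k)` the coordinate `ω (i, k)` has coefficient `δ_{ij} L j k - B j i`, and the coordinates
outside column `k` do not occur. A linear form `∑ p, c p * ω p` is square integrable and centred,
and by independence its second moment, which is its variance, equals `∑ p, (c p) ^ 2`
(`integral_sq_linear_form`). Summing over all entries, the term `i = j` gives
`(L j k - B j j) ^ 2`, and the terms `i ≠ j` do not depend on `k`, whence the factor `K`.
-/

open MeasureTheory ProbabilityTheory Finset

lemma memLp_linear_form {ι : Type*} [Fintype ι] (c : ι → ℝ) :
    MemLp (fun ω : ι → ℝ => ∑ p, c p * ω p) 2 (Measure.pi fun _ : ι => gaussianReal 0 1) := by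
  refine memLp_finsetSum _ fun p _ => MemLp.const_mul ?_ _
  exact (memLp_id_gaussianReal 2).comp_measurePreserving
    (measurePreserving_eval (fun _ : ι => gaussianReal 0 1) p)

lemma integral_sq_linear_form {ι : Type*} [Fintype ι] (c : ι → ℝ) :
    ∫ ω : ι → ℝ, (∑ p, c p * ω p) ^ 2 ∂(Measure.pi fun _ : ι => gaussianReal 0 1)
      = ∑ p, (c p) ^ 2 := by
  have hcoord (p : ι) :
      Integrable (fun ω : ι → ℝ => ω p) (Measure.pi fun _ : ι => gaussianReal 0 1) :=
    ((memLp_id_gaussianReal 1).comp_measurePreserving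
      (measurePreserving_eval (fun _ : ι => gaussianReal 0 1) p)).integrable le_rfl
  have hmean : ∫ ω : ι → ℝ, (∑ p, c p * ω p) ∂(Measure.pi fun _ : ι => gaussianReal 0 1) = 0 := by
    rw [integral_finsetSum _ fun p _ => (hcoord p).const_mul _]
    refine Finset.sum_eq_zero fun p _ => ?_
    rw [integral_const_mul, integral_eval (μ := fun _ : ι => gaussianReal 0 1) (i := p)]
    simp
  have hvar := variance_sum_pi (μ := fun _ : ι => gaussianReal 0 1) (X := fun p x => c p * x)
    (fun p => (memLp_id_gaussianReal 2).const_mul (c p))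
  have hsum : (∑ i, fun ω : ι → ℝ => c i * ω i) = fun ω => ∑ p, c p * ω p := by
    ext ω; simp
  rw [hsum, variance_of_integral_eq_zero (memLp_linear_form c).aestronglyMeasurable.aemeasurable
    hmean] at hvar
  rw [hvar]
  refine Finset.sum_congr rfl fun p _ => ?_
  have hone := variance_id_gaussianReal (μ := 0) (v := 1)
  have := variance_const_mul (c p) id (gaussianReal 0 1)
  rw [hone] at this
  simpa using this

/-- Expected squared Frobenius norm of `Δ(B) = L ∘ G − B * G` where the entries
of `G` are i.i.d. standard real Gaussians. -/
theorem expected_sq_frobenius_norm_hadamard_sub_mul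
    (J K : ℕ) (hJ : 0 < J) (hK : 0 < K)
    (L : Fin J → Fin K → ℝ) (B : Matrix (Fin J) (Fin J) ℝ) :
    (∫ ω : (Fin J × Fin K) → ℝ,
        (∑ j : Fin J, ∑ k : Fin K,
          ((Matrix.hadamard (Matrix.of L) (Matrix.of fun j k => ω (j, k))
            - B * Matrix.of fun j k => ω (j, k)) j k) ^ 2)
        ∂(Measure.pi fun _ : Fin J × Fin K => gaussianReal 0 1))
      = (∑ j : Fin J, ∑ k : Fin K, (L j k - B j j) ^ 2)
        + (K : ℝ) * ∑ j : Fin J, ∑ i ∈ Finset.univ.filter (fun i => i ≠ j), (B j i) ^ 2 := by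
  -- Coefficient of `ω p` in the entry `(j, k)` of `Δ(B)`.
  let c (j : Fin J) (k : Fin K) (p : Fin J × Fin K) : ℝ :=
    if p.2 = k then (if p.1 = j then L j k else 0) - B j p.1 else 0
  have hentry (ω : Fin J × Fin K → ℝ) (j : Fin J) (k : Fin K) :
      (Matrix.hadamard (Matrix.of L) (Matrix.of fun j k => ω (j, k))
        - B * Matrix.of fun j k => ω (j, k)) j k = ∑ p, c j k p * ω p := by
    simp [c, Fintype.sum_prod_type, Matrix.mul_apply, sub_mul, Finset.sum_sub_distrib]
  have hint (j : Fin J) (k : Fin K) :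
      Integrable (fun ω : Fin J × Fin K → ℝ => (∑ p, c j k p * ω p) ^ 2)
        (Measure.pi fun _ : Fin J × Fin K => gaussianReal 0 1) :=
    (memLp_linear_form (c j k)).integrable_sq
  have hcoef (j : Fin J) (k : Fin K) :
      ∑ p, (c j k p) ^ 2 =
        (L j k - B j j) ^ 2 + ∑ i ∈ Finset.univ.filter (fun i => i ≠ j), (B j i) ^ 2 := by
    have hcol : ∑ p, (c j k p) ^ 2 = ∑ i, ((if i = j then L j k else 0) - B j i) ^ 2 := by
      simp [c, Fintype.sum_prod_type, ite_pow]
    rw [hcol, ← Finset.add_sum_erase _ _ (Finset.mem_univ j), Finset.filter_ne']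
    congr 1
    · simp
    · refine Finset.sum_congr rfl fun i hi => ?_
      simp [Finset.ne_of_mem_erase hi]
  simp_rw [hentry]
  rw [integral_finsetSum _ fun j _ => integrable_finsetSum _ fun k _ => hint j k]
  simp_rw [integral_finsetSum _ fun k _ => hint _ k, integral_sq_linear_form, hcoef,
    Finset.sum_add_distrib]
  simp [Finset.mul_sum]
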